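/- arXiv:1304.5262 — 4 statements merged into one kernel-verified Lean document; each statement's English description precedes it below -/
import Mathlib

section
/- For every natural number N with N ≥ 4, the number of primes less than or equal to N is at least N divided by the base-2 logarithm of N; that is, (N : ℝ) / logb 2 N ≤ π(N). -/
open Real

/-!
Every prime power dividing `lcm(1, …, N)` is at most `N`, so `lcm(1, …, N) ≤ N ^ π(N)`, and it is
enough to show `2 ^ N ≤ lcm(1, …, N)`. The divisibility `C(2m, m) ∣ lcm(1, …, 2m)` alone loses a
factor of order `N`. Leibniz's harmonic triangle wins it back: its entries
`1 / ((n + 1) C(n, k))` are obtained from `1, 1/2, …, 1/(n + 1)` by subtractions, hence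
`(n + 1) C(n, k) ∣ lcm(1, …, n + 1)`. Two neighbouring entries yield the coprime factors `m` and
`2m + 1`, so that `m (2m + 1) C(2m, m)`, which is at least `m 4 ^ m`, divides `lcm(1, …, 2m + 1)`.
-/

theorem dvd_of_mul_eq_mul_add {R : Type*} [CommRing R] [NoZeroDivisors R] {x y z d : R}
    (hx : x ≠ 0) (hz : z ≠ 0) (h : x * y = z * (x + y)) (hxd : x ∣ d) (hzd : z ∣ d) : y ∣ d := by
  obtain ⟨a, ha⟩ := hzd
  obtain ⟨b, hb⟩ := hxd
  -- The hypothesis says `1 / y = 1 / z - 1 / x`, hence `d / y = a - b`.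
  refine ⟨a - b, mul_left_cancel₀ (mul_ne_zero hx hz) ?_⟩
  linear_combination x * y * ha - z * y * hb - d * h

/-- The denominator `(n + 1) * C(n, k)` of the `k`-th entry in row `n` of Leibniz's harmonic
triangle, rows and entries being numbered from `0`. It is `0` for `k > n`. -/
def leibnizDenom (n k : ℕ) : ℕ := (n + 1) * n.choose k

theorem leibnizDenom_ne_zero {n k : ℕ} (hk : k ≤ n) : leibnizDenom n k ≠ 0 :=
  mul_ne_zero n.succ_ne_zero (Nat.choose_ne_zero hk)

theorem leibnizDenom_zero_right (n : ℕ) : leibnizDenom n 0 = n + 1 := by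
  simp [leibnizDenom]

theorem leibnizDenom_eq_choose_succ_mul (n k : ℕ) :
    leibnizDenom n k = (n + 1).choose (k + 1) * (k + 1) :=
  Nat.add_one_mul_choose_eq n k

theorem leibnizDenom_succ_mul_succ_succ (n k : ℕ) :
    leibnizDenom (n + 1) k * leibnizDenom (n + 1) (k + 1) =
      leibnizDenom n k * (leibnizDenom (n + 1) k + leibnizDenom (n + 1) (k + 1)) := by
  have pascal : leibnizDenom (n + 1) k + leibnizDenom (n + 1) (k + 1) =
      (n + 2) * (n + 2).choose (k + 1) := by
    rw [leibnizDenom, leibnizDenom, ← mul_add, ← Nat.choose_succ_succ]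
  rw [pascal, leibnizDenom_eq_choose_succ_mul (n + 1) k, leibnizDenom_eq_choose_succ_mul n k,
    leibnizDenom]
  ring

theorem dvd_lcmUpto {j n : ℕ} (hj : j ≠ 0) (hjn : j ≤ n) : j ∣ n.lcmUpto :=
  Finset.dvd_lcm (f := id) (Finset.mem_Icc.mpr ⟨Nat.one_le_iff_ne_zero.mpr hj, hjn⟩)

theorem lcmUpto_dvd_lcmUpto {m n : ℕ} (hmn : m ≤ n) : m.lcmUpto ∣ n.lcmUpto :=
  Finset.lcm_mono (Finset.Icc_subset_Icc_right hmn)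

theorem leibnizDenom_dvd_lcmUpto {n k : ℕ} (hk : k ≤ n) :
    leibnizDenom n k ∣ (n + 1).lcmUpto := by
  induction k generalizing n with
  | zero =>
    rw [leibnizDenom_zero_right]
    exact dvd_lcmUpto n.succ_ne_zero le_rfl
  | succ k ih =>
    obtain _ | n := n
    · omega
    have left : leibnizDenom (n + 1) k ∣ (n + 2).lcmUpto := ih (by omega)
    have above : leibnizDenom n k ∣ (n + 2).lcmUpto :=
      (ih (by omega)).trans (lcmUpto_dvd_lcmUpto (by omega))
    have left_ne_zero : leibnizDenom (n + 1) k ≠ 0 := leibnizDenom_ne_zero (by omega)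
    have above_ne_zero : leibnizDenom n k ≠ 0 := leibnizDenom_ne_zero (by omega)
    have triangle := leibnizDenom_succ_mul_succ_succ n k
    zify at left above left_ne_zero above_ne_zero triangle ⊢
    exact dvd_of_mul_eq_mul_add left_ne_zero above_ne_zero triangle left above

theorem mul_centralBinom_dvd_lcmUpto {m : ℕ} (hm : m ≠ 0) :
    m * (2 * m + 1) * m.centralBinom ∣ (2 * m + 1).lcmUpto := by
  obtain ⟨q, rfl⟩ := Nat.exists_eq_succ_of_ne_zero hm
  have dvd_even : (q + 1) * (q + 1).centralBinom ∣ (2 * (q + 1) + 1).lcmUpto := by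
    have h := leibnizDenom_dvd_lcmUpto (n := 2 * q + 1) (k := q) (by omega)
    rw [leibnizDenom_eq_choose_succ_mul, mul_comm] at h
    exact h.trans (lcmUpto_dvd_lcmUpto (by omega))
  have dvd_odd : (2 * (q + 1) + 1) * (q + 1).centralBinom ∣ (2 * (q + 1) + 1).lcmUpto :=
    leibnizDenom_dvd_lcmUpto (by omega)
  have coprime : Nat.Coprime (q + 1) (2 * (q + 1) + 1) := by simp
  simpa only [Nat.lcm_mul_right, coprime.lcm_eq_mul] using Nat.lcm_dvd dvd_even dvd_odd

theorem mul_four_pow_le_lcmUpto (m : ℕ) : m * 4 ^ m ≤ (2 * m + 1).lcmUpto := by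
  obtain rfl | hm := eq_or_ne m 0
  · simp
  calc m * 4 ^ m ≤ m * ((2 * m + 1) * m.centralBinom) :=
        Nat.mul_le_mul_left m (Nat.four_pow_le_two_mul_add_one_mul_central_binom m)
    _ = m * (2 * m + 1) * m.centralBinom := (mul_assoc ..).symm
    _ ≤ (2 * m + 1).lcmUpto :=
        Nat.le_of_dvd (Nat.lcmUpto_pos _) (mul_centralBinom_dvd_lcmUpto hm)

theorem two_pow_le_lcmUpto {n : ℕ} (hn : 7 ≤ n) : 2 ^ n ≤ n.lcmUpto := by
  obtain ⟨m, rfl | rfl⟩ : ∃ m, n = 2 * m + 1 ∨ n = 2 * m + 2 := ⟨(n - 1) / 2, by omega⟩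
  · calc 2 ^ (2 * m + 1) = 2 * 4 ^ m := by rw [pow_succ', pow_mul]; norm_num
      _ ≤ m * 4 ^ m := Nat.mul_le_mul_right _ (by omega)
      _ ≤ (2 * m + 1).lcmUpto := mul_four_pow_le_lcmUpto m
  · obtain rfl | hm : m = 3 ∨ 4 ≤ m := by omega
    · decide
    calc 2 ^ (2 * m + 2) = 4 * 4 ^ m := by rw [pow_add, pow_mul, mul_comm]; norm_num
      _ ≤ m * 4 ^ m := Nat.mul_le_mul_right _ hm
      _ ≤ (2 * m + 1).lcmUpto := mul_four_pow_le_lcmUpto m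
      _ ≤ (2 * m + 2).lcmUpto :=
        Nat.le_of_dvd (Nat.lcmUpto_pos _) (lcmUpto_dvd_lcmUpto (Nat.le_succ _))

theorem lcmUpto_le_pow_primeCounting (n : ℕ) : n.lcmUpto ≤ n ^ n.primeCounting := by
  rw [Nat.lcmUpto_eq_prod_pow_log, ← Nat.primesLE_card_eq_primeCounting]
  refine Finset.prod_le_pow_card _ _ _ fun p hp ↦ Nat.pow_log_le_self p ?_
  have := Nat.le_of_mem_primesLE hp
  have := Nat.two_le_of_mem_primesLE hp
  omega

theorem two_pow_le_pow_primeCounting {n : ℕ} (hn : 3 ≤ n) : 2 ^ n ≤ n ^ n.primeCounting := by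
  obtain hn7 | hn7 := lt_or_ge n 7
  · interval_cases n <;> decide
  · exact (two_pow_le_lcmUpto hn7).trans (lcmUpto_le_pow_primeCounting n)

theorem pi_lower_bound (N : ℕ) (hN : 4 ≤ N) :
    (N : ℝ) / Real.logb 2 N ≤ (Nat.primeCounting N : ℝ) := by
  have one_lt_N : (1 : ℝ) < N := by exact_mod_cast (by omega : 1 < N)
  have two_pow_le : (2 : ℝ) ^ N ≤ (N : ℝ) ^ N.primeCounting := by
    exact_mod_cast two_pow_le_pow_primeCounting (by omega)
  rw [div_le_iff₀ (logb_pos one_lt_two one_lt_N)]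
  calc (N : ℝ) = logb 2 (2 ^ N) := by simp [logb_pow]
    _ ≤ logb 2 (N ^ N.primeCounting) := logb_le_logb_of_le one_lt_two (by positivity) two_pow_le
    _ = N.primeCounting * logb 2 N := logb_pow ..
end

section
/- For every real ε > 0 there exists a natural number N₀ such that for all natural numbers N ≥ N₀ one has (log 2 − ε) · N / log N ≤ π(N), where log denotes the natural logarithm. -/
open Real

/-!
Every prime power dividing `lcm(1, …, N)` is at most `N`, so `lcm(1, …, N) ≤ N ^ π(N)`. On the other
hand each binomial coefficient `N.choose k` divides `lcm(1, …, N)`, and these `N + 1` coefficients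
sum to `2 ^ N`, so `2 ^ N ≤ (N + 1) * N ^ π(N)`. Taking logarithms gives `Chebyshev.pi_ge`, namely
`(N log 2 - log (N + 1)) / log N ≤ π(N)`, whose error term `log (N + 1)` is eventually absorbed
by `ε N`.
-/

open Asymptotics Filter

theorem isLittleO_log_add_const_id_atTop (c : ℝ) :
    (fun x : ℝ ↦ log (x + c)) =o[atTop] (id : ℝ → ℝ) := by
  have log_shift : (fun x : ℝ ↦ log (x + c)) =o[atTop] (fun x : ℝ ↦ x + c) :=
    isLittleO_log_id_atTop.comp_tendsto (tendsto_atTop_add_const_right _ c tendsto_id)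
  have shift : (fun x : ℝ ↦ x + c) =O[atTop] (id : ℝ → ℝ) :=
    (isBigO_refl id atTop).add (isLittleO_const_id_atTop c).isBigO
  exact log_shift.trans_isBigO shift

theorem erdos_kalmar_lower (ε : ℝ) (hε : 0 < ε) :
    ∃ N₀ : ℕ, ∀ N : ℕ, N₀ ≤ N →
      (Real.log 2 - ε) * N / Real.log N ≤ (Nat.primeCounting N : ℝ) := by
  have log_le : ∀ᶠ N : ℕ in atTop, ‖log ((N : ℝ) + 1)‖ ≤ ε * ‖(N : ℝ)‖ :=
    tendsto_natCast_atTop_atTop.eventually ((isLittleO_log_add_const_id_atTop 1).bound hε)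
  refine eventually_atTop.mp (log_le.mono fun N hN ↦ ?_)
  have error_le : log ((N : ℝ) + 1) ≤ ε * N := by
    simpa only [RCLike.norm_natCast] using (le_norm_self _).trans hN
  calc (log 2 - ε) * N / log N
      ≤ (N * log 2 - log (N + 1)) / log N :=
        div_le_div_of_nonneg_right (by linarith) (log_natCast_nonneg N)
    _ ≤ Nat.primeCounting N := Chebyshev.pi_ge N
end

section
/- Let a and x be real numbers with a ≥ 0 and x > 1, and define n = x · (√(a + x) − √a)² / (2 · logb 2 x). Then n > 0 and a = (x² − 2·n·logb 2 x)² / (8·n·x·logb 2 x). -/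
open Real

/-!
Put `d = √(a + x) - √a`. Squaring `√(a + x) = √a + d` gives `x - d ^ 2 = 2 * √a * d`, so `d`
determines `a`, namely `a = (x - d ^ 2) ^ 2 / (4 * d ^ 2)`. The definition of `n` says
`2 * n * logb 2 x = x * d ^ 2`, and eliminating `d ^ 2` yields the formula for `a`.
-/

section SqrtIncrement

variable {a x : ℝ}

lemma sqrt_add_sub_sqrt_ne_zero (ha : 0 ≤ a) (hax : 0 ≤ a + x) (hx : x ≠ 0) :
    √(a + x) - √a ≠ 0 := by
  rwa [sub_ne_zero, Ne, sqrt_inj hax ha, add_eq_left]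

lemma sub_sq_sqrt_add_sub_sqrt (ha : 0 ≤ a) (hax : 0 ≤ a + x) :
    x - (√(a + x) - √a) ^ 2 = 2 * √a * (√(a + x) - √a) := by
  linear_combination sq_sqrt ha - sq_sqrt hax

lemma eq_sq_div_four_mul_sq_sqrt_add_sub_sqrt (ha : 0 ≤ a) (hax : 0 ≤ a + x) (hx : x ≠ 0) :
    a = (x - (√(a + x) - √a) ^ 2) ^ 2 / (4 * (√(a + x) - √a) ^ 2) := by
  have hd := sqrt_add_sub_sqrt_ne_zero ha hax hx
  rw [sub_sq_sqrt_add_sub_sqrt ha hax, eq_div_iff (by positivity), mul_pow, mul_pow, sq_sqrt ha]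
  ring

end SqrtIncrement

theorem algo_531_inverse_general {a x L n : ℝ} (ha : 0 ≤ a) (hax : 0 ≤ a + x) (hx : x ≠ 0)
    (hL : L ≠ 0) (hn : n = x * (√(a + x) - √a) ^ 2 / (2 * L)) :
    (0 < n ↔ 0 < x / L) ∧ a = (x ^ 2 - 2 * n * L) ^ 2 / (8 * n * x * L) := by
  have hd := sqrt_add_sub_sqrt_ne_zero ha hax hx
  have ha_eq := eq_sq_div_four_mul_sq_sqrt_add_sub_sqrt ha hax hx
  set d := √(a + x) - √a
  constructor
  · have hn_eq : n = x / L * (d ^ 2 / 2) := by rw [hn]; ring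
    rw [hn_eq, mul_pos_iff_of_pos_right (by positivity)]
  · have hnL : 2 * n * L = x * d ^ 2 := by rw [hn]; field_simp
    calc
      a = (x - d ^ 2) ^ 2 / (4 * d ^ 2) := ha_eq
      _ = (x ^ 2 - x * d ^ 2) ^ 2 / (4 * x * (x * d ^ 2)) := by field_simp
      _ = (x ^ 2 - 2 * n * L) ^ 2 / (8 * n * x * L) := by rw [← hnL]; ring

theorem algo_531_inverse (a x n : ℝ) (ha : 0 ≤ a) (hx : 1 < x)
    (hn : n = x * (Real.sqrt (a + x) - Real.sqrt a) ^ 2 / (2 * Real.logb 2 x)) :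
    0 < n ∧ a = (x ^ 2 - 2 * n * Real.logb 2 x) ^ 2 / (8 * n * x * Real.logb 2 x) := by
  have hx_pos : 0 < x := one_pos.trans hx
  have hlog : 0 < logb 2 x := logb_pos one_lt_two hx
  exact (algo_531_inverse_general ha (by positivity) hx_pos.ne' hlog.ne' hn).imp_left
    fun hn_pos_iff => hn_pos_iff.mpr (div_pos hx_pos hlog)
end

section
/- Let x and n be real numbers with x > 1, n > 0 and 2·n·logb 2 x ≤ x², and define b = (x² + 2·n·logb 2 x)² / (8·n·x·logb 2 x). Then x ≤ b and x · (√b − √(b − x))² / (2 · logb 2 x) = n. -/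
open Real

/-!
Put `t = 2 * n * L / x` with `L = logb 2 x`. Then `b = (x + t) ^ 2 / (4 * t)`, and since
`(x + t) ^ 2` and `(x - t) ^ 2` differ by `4 * t * x`, also `b - x = (x - t) ^ 2 / (4 * t)`. As
`t ≤ x`, both square roots are explicit and differ by exactly `√t`, so that
`x * (√b - √(b - x)) ^ 2 = x * t`.
-/

theorem add_sq_div_four_mul_sub {K : Type*} [Field K] [NeZero (4 : K)] (x : K) {t : K}
    (ht : t ≠ 0) : (x + t) ^ 2 / (4 * t) - x = (x - t) ^ 2 / (4 * t) := by
  field_simp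
  ring

theorem le_add_sq_div_four_mul {K : Type*} [Field K] [LinearOrder K] [IsStrictOrderedRing K]
    (x : K) {t : K} (ht : 0 < t) : x ≤ (x + t) ^ 2 / (4 * t) := by
  rw [← sub_nonneg, add_sq_div_four_mul_sub x ht.ne']
  positivity

theorem sqrt_sq_div_four_mul {a : ℝ} (ha : 0 ≤ a) (t : ℝ) :
    √(a ^ 2 / (4 * t)) = a / (2 * √t) := by
  have sqrt_four : √(4 : ℝ) = 2 := by
    rw [show (4 : ℝ) = 2 ^ 2 by norm_num, sqrt_sq zero_le_two]
  rw [sqrt_div (sq_nonneg a), sqrt_sq ha, sqrt_mul zero_le_four, sqrt_four]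

theorem sqrt_add_sq_div_four_mul_sub_sqrt {x t : ℝ} (ht : 0 < t) (htx : t ≤ x) :
    √((x + t) ^ 2 / (4 * t)) - √((x + t) ^ 2 / (4 * t) - x) = √t := by
  have hx : 0 ≤ x := ht.le.trans htx
  calc
    √((x + t) ^ 2 / (4 * t)) - √((x + t) ^ 2 / (4 * t) - x)
      = (x + t) / (2 * √t) - (x - t) / (2 * √t) := by
        rw [add_sq_div_four_mul_sub x ht.ne', sqrt_sq_div_four_mul (add_nonneg hx ht.le),
          sqrt_sq_div_four_mul (sub_nonneg.2 htx)]
    _ = t / √t := by ring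
    _ = √t := div_sqrt

theorem algo_541_general (x n L b : ℝ) (hx : 0 < x) (hnL : 0 < n * L)
    (h : 2 * n * L ≤ x ^ 2) (hb : b = (x ^ 2 + 2 * n * L) ^ 2 / (8 * n * x * L)) :
    x ≤ b ∧ x * (√b - √(b - x)) ^ 2 / (2 * L) = n := by
  obtain ⟨hn, hL⟩ : n ≠ 0 ∧ L ≠ 0 := mul_ne_zero_iff.1 hnL.ne'
  obtain ⟨t, ht⟩ : ∃ t, t = 2 * n * L / x := ⟨_, rfl⟩
  have t_pos : 0 < t := by
    rw [ht, mul_assoc]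
    positivity
  have t_le : t ≤ x := by rwa [ht, div_le_iff₀ hx, ← sq]
  have b_eq : b = (x + t) ^ 2 / (4 * t) := by
    rw [hb, ht]
    field_simp
    ring
  subst b_eq
  refine ⟨le_add_sq_div_four_mul x t_pos, ?_⟩
  rw [sqrt_add_sq_div_four_mul_sub_sqrt t_pos t_le, sq_sqrt t_pos.le, ht]
  field_simp

theorem algo_541 (x n b : ℝ) (hx : 1 < x) (hn : 0 < n)
    (h : 2 * n * Real.logb 2 x ≤ x ^ 2)
    (hb : b = (x ^ 2 + 2 * n * Real.logb 2 x) ^ 2 / (8 * n * x * Real.logb 2 x)) :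
    x ≤ b ∧ x * (Real.sqrt b - Real.sqrt (b - x)) ^ 2 / (2 * Real.logb 2 x) = n :=
  algo_541_general x n (logb 2 x) b (zero_lt_one.trans hx)
    (mul_pos hn (logb_pos one_lt_two hx)) h hb
end
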